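/- Let α ∈ (0,1). There is a constant c > 0 depending only on α such that for every n ≥ 2, every r > 0, every Borel subset A of ℝ^n, and every C > 0 with ν_α^n(A) > 1/C, one has ν_α^n( x ∉ A + C (log n)^{1/α − 1}( √r B_{ℓ^2} + r B_{ℓ^1} ) + r^{1/α} B_{ℓ^α} ) ≤ e^{−c r} / ( ν_α^n(A) − 1/C ). -/

import Mathlib

open MeasureTheory Filter Topology Pointwise

noncomputable section

/-- The (unnormalized) measure on `ℝ` with density `exp (-|x|^α)`. -/
def nuKernel (α : ℝ) : Measure ℝ :=
  volume.withDensity fun x => ENNReal.ofReal (Real.exp (-|x| ^ α))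

/-- The probability measure `ν_α` on `ℝ`. -/
def nuAlpha (α : ℝ) : Measure ℝ := (nuKernel α Set.univ)⁻¹ • nuKernel α

/-- The `n`-fold product measure `ν_α^n` on `ℝ^n`. -/
def nuPi (α : ℝ) (n : ℕ) : Measure (Fin n → ℝ) := Measure.pi fun _ => nuAlpha α

/-- `‖h‖_{ℓ^p} = (∑ |h i|^p)^(1/p)`. -/
def lpNorm (p : ℝ) {n : ℕ} (h : Fin n → ℝ) : ℝ := (∑ i, |h i| ^ p) ^ (1 / p)

/-- The unit ball of `ℓ^p` in `ℝ^n`. -/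
def lpBall (p : ℝ) (n : ℕ) : Set (Fin n → ℝ) := {h | lpNorm p h ≤ 1}

/-! One-dimensional Brunn–Minkowski gives Prékopa–Leindler. Taken at midpoints, for the log-concave
density `sin s / 2` on `(0, π)`, it yields an infimum-convolution inequality (Maurey's property `τ`)
for the sine law. Its image under `s ↦ (1 - cos s) / 2` is the uniform law on `(0, 1)`, with cost
`min (d ^ 2) |d| / 32` in the difference `d` of the logits. The distribution function carries this
to `ν_α`, and the inequality tensorizes to `ν_α^n`.

The tail of `ν_α` beyond `z ≥ 0` is `O((1 + z)^(1 - α))` times the density at `z`, so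
`|x - y| ≤ K (1 + max |x| |y|)^(1 - α) |d|`. A displacement of total cost `r` from a point of the
box `[-M, M]^n` is therefore, up to constants, in
`M^(1 - α) (√r B_{ℓ^2} + r B_{ℓ^1}) + r^(1 / α) B_{ℓ^α}`, the last term collecting the coordinates
that move by more than `2 M`. The box with `M = (2 log (K n C))^(1 / α)` misses mass at most
`1 / C` for a suitable `K`, and `M^(1 - α)` is at most a constant times `C (log n)^(1 / α - 1)`. -/

open Set Real ProbabilityTheory
open scoped ENNReal

theorem volume_add_le_volume_add_of_isCompact {K L : Set ℝ} (hK : IsCompact K) (hL : IsCompact L)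
    (hK' : K.Nonempty) (hL' : L.Nonempty) : volume K + volume L ≤ volume (K + L) := by
  obtain ⟨a, haK, ha⟩ := hK.exists_isGreatest hK'
  obtain ⟨b, hbL, hb⟩ := hL.exists_isLeast hL'
  -- The translates `b + K` and `a + L` lie in `K + L` and meet only at `a + b`.
  have hdisj : AEDisjoint volume (b +ᵥ K) (a +ᵥ L) := by
    refine measure_mono_null (t := {a + b}) ?_ (by simp)
    rintro _ ⟨⟨k, hk, rfl⟩, l, hl, hkl : a + l = b + k⟩
    have hka : k ≤ a := ha hk
    have hbl : b ≤ l := hb hl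
    exact show b + k = a + b by linarith
  calc volume K + volume L = volume (b +ᵥ K) + volume (a +ᵥ L) := by simp
    _ = volume ((b +ᵥ K) ∪ (a +ᵥ L)) :=
      (measure_union₀ (hL.measurableSet.const_vadd a).nullMeasurableSet hdisj).symm
    _ ≤ volume (K + L) := by
      refine measure_mono (union_subset ?_ ?_)
      · rintro _ ⟨k, hk, rfl⟩
        exact ⟨k, hk, b, hbL, add_comm k b⟩
      · rintro _ ⟨l, hl, rfl⟩
        exact ⟨a, haK, l, hl, rfl⟩

theorem volume_add_le_volume_add {A B : Set ℝ} (hA : MeasurableSet A) (hB : MeasurableSet B)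
    (hA' : A.Nonempty) (hB' : B.Nonempty) : volume A + volume B ≤ volume (A + B) := by
  obtain ⟨a, ha⟩ := hA'
  obtain ⟨b, hb⟩ := hB'
  rw [hA.measure_eq_iSup_isCompact, hB.measure_eq_iSup_isCompact]
  simp_rw [iSup_and']
  refine ENNReal.biSup_add_biSup_le' ⟨∅, by simp⟩ ⟨∅, by simp⟩ fun K hK L hL => ?_
  calc volume K + volume L ≤ volume (insert a K) + volume (insert b L) := by gcongr <;> simp
    _ ≤ volume (insert a K + insert b L) :=
      volume_add_le_volume_add_of_isCompact (hK.2.insert a) (hL.2.insert b)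
        (insert_nonempty _ _) (insert_nonempty _ _)
    _ ≤ volume (A + B) :=
      measure_mono (add_subset_add (insert_subset ha hK.1) (insert_subset hb hL.1))

theorem lintegral_eq_lintegral_meas_ofReal_lt {X : Type*} [MeasurableSpace X] (μ : Measure X)
    {f : X → ℝ≥0∞} (hf : AEMeasurable f μ) (hf_top : ∀ x, f x ≠ ∞) :
    ∫⁻ x, f x ∂μ = ∫⁻ t in Ioi 0, μ {x | ENNReal.ofReal t < f x} := by
  calc ∫⁻ x, f x ∂μ = ∫⁻ x, ENNReal.ofReal (f x).toReal ∂μ := by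
        simp_rw [ENNReal.ofReal_toReal (hf_top _)]
    _ = ∫⁻ t in Ioi 0, μ {x | t < (f x).toReal} :=
      lintegral_eq_lintegral_meas_lt μ (ae_of_all _ fun _ => ENNReal.toReal_nonneg)
        hf.ennreal_toReal
    _ = _ := setLIntegral_congr_fun measurableSet_Ioi fun t ht => by
      simp_rw [ENNReal.ofReal_lt_iff_lt_toReal (le_of_lt ht) (hf_top _)]

theorem ennreal_rpow_mul_rpow_le_add {a b : ℝ} (ha : 0 < a) (hb : 0 < b) (hab : a + b = 1)
    (x y : ℝ≥0∞) : x ^ a * y ^ b ≤ ENNReal.ofReal a * x + ENNReal.ofReal b * y := by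
  have h := ENNReal.young_inequality (x ^ a) (y ^ b) (Real.HolderConjugate.inv_inv ha hb hab)
  rwa [ENNReal.rpow_rpow_inv ha.ne', ENNReal.rpow_rpow_inv hb.ne', ENNReal.ofReal_inv_of_pos ha,
    ENNReal.ofReal_inv_of_pos hb, ENNReal.div_eq_inv_mul, ENNReal.div_eq_inv_mul, inv_inv,
    inv_inv] at h

section PrekopaLeindler

variable {a b : ℝ} {f g h : ℝ → ℝ≥0∞}

theorem ofReal_mul_volume_superlevel_add_le (ha : 0 < a) (hb : 0 < b) (hab : a + b = 1)
    (hf : Measurable f) (hg : Measurable g)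
    (hfgh : ∀ x y, f x ^ a * g y ^ b ≤ h (a * x + b * y)) {t : ℝ≥0∞}
    (hft : ∃ x, t < f x) (hgt : ∃ y, t < g y) :
    ENNReal.ofReal a * volume {x | t < f x} + ENNReal.ofReal b * volume {x | t < g x} ≤
      volume {x | t < h x} := by
  have hvol {c : ℝ} (hc : 0 < c) (s : Set ℝ) : ENNReal.ofReal c * volume s = volume (c • s) := by
    simp [Measure.addHaar_smul, abs_of_pos hc]
  rw [hvol ha, hvol hb]
  refine (volume_add_le_volume_add ((measurableSet_lt measurable_const hf).const_smul₀ a)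
    ((measurableSet_lt measurable_const hg).const_smul₀ b) (Set.Nonempty.smul_set hft)
    (Set.Nonempty.smul_set hgt)).trans (measure_mono ?_)
  rintro _ ⟨_, ⟨x, hx : t < f x, rfl⟩, _, ⟨y, hy : t < g y, rfl⟩, rfl⟩
  calc t = t ^ a * t ^ b := by
        rw [← ENNReal.rpow_add_of_nonneg _ _ ha.le hb.le, hab, ENNReal.rpow_one]
    _ < f x ^ a * g y ^ b :=
      ENNReal.mul_lt_mul (ENNReal.rpow_lt_rpow hx ha) (ENNReal.rpow_lt_rpow hy hb)
    _ ≤ h (a * x + b * y) := hfgh x y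

theorem ofReal_mul_lintegral_add_le_of_iSup_eq_one (ha : 0 < a) (hb : 0 < b) (hab : a + b = 1)
    (hf : Measurable f) (hg : Measurable g) (hh : Measurable h) (hf1 : ⨆ x, f x = 1)
    (hg1 : ⨆ x, g x = 1) (hfgh : ∀ x y, f x ^ a * g y ^ b ≤ h (a * x + b * y)) :
    ENNReal.ofReal a * (∫⁻ x, f x) + ENNReal.ofReal b * (∫⁻ x, g x) ≤ ∫⁻ x, h x := by
  wlog hh_top : ∀ x, h x ≠ ∞ generalizing h
  · have hfg1 (x y : ℝ) : f x ^ a * g y ^ b ≤ 1 :=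
      mul_le_one' (ENNReal.rpow_le_one (hf1 ▸ le_iSup f x) ha.le)
        (ENNReal.rpow_le_one (hg1 ▸ le_iSup g y) hb.le)
    exact (this (hh.min measurable_const) (fun x y => le_min (hfgh x y) (hfg1 x y))
      fun x => (min_le_right _ _).trans_lt ENNReal.one_lt_top |>.ne).trans
        (lintegral_mono fun x => min_le_left _ _)
  have hmeas (k : ℝ → ℝ≥0∞) : Measurable fun t : ℝ => volume {x | ENNReal.ofReal t < k x} :=
    Antitone.measurable fun s t hst => measure_mono fun x hx =>
      (ENNReal.ofReal_le_ofReal hst).trans_lt hx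
  have hempty {k : ℝ → ℝ≥0∞} (hk : ⨆ x, k x = 1) {t : ℝ} (ht : 1 ≤ t) :
      {x | ENNReal.ofReal t < k x} = ∅ :=
    eq_empty_of_forall_notMem fun x hx => (hk ▸ le_iSup k x).not_gt
      ((ENNReal.one_le_ofReal.2 ht).trans_lt hx)
  have htop {k : ℝ → ℝ≥0∞} (hk : ⨆ x, k x = 1) (x : ℝ) : k x ≠ ∞ :=
    ((hk ▸ le_iSup k x).trans_lt ENNReal.one_lt_top).ne
  rw [lintegral_eq_lintegral_meas_ofReal_lt _ hf.aemeasurable (htop hf1),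
    lintegral_eq_lintegral_meas_ofReal_lt _ hg.aemeasurable (htop hg1),
    lintegral_eq_lintegral_meas_ofReal_lt _ hh.aemeasurable hh_top,
    ← lintegral_const_mul _ (hmeas f), ← lintegral_const_mul _ (hmeas g),
    ← lintegral_add_left ((hmeas f).const_mul _)]
  refine lintegral_mono fun t => ?_
  rcases lt_or_ge t 1 with ht | ht
  · have ht' : ENNReal.ofReal t < 1 := by simpa using ht
    exact ofReal_mul_volume_superlevel_add_le ha hb hab hf hg hfgh (lt_iSup_iff.1 (hf1 ▸ ht'))
      (lt_iSup_iff.1 (hg1 ▸ ht'))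
  · simp [hempty hf1 ht, hempty hg1 ht]

theorem prekopa_leindler_of_iSup_ne_top (ha : 0 < a) (hb : 0 < b) (hab : a + b = 1)
    (hf : Measurable f) (hg : Measurable g) (hh : Measurable h) (hf_top : ⨆ x, f x ≠ ∞)
    (hg_top : ⨆ x, g x ≠ ∞) (hfgh : ∀ x y, f x ^ a * g y ^ b ≤ h (a * x + b * y)) :
    (∫⁻ x, f x) ^ a * (∫⁻ x, g x) ^ b ≤ ∫⁻ x, h x := by
  set p := ⨆ x, f x with hp
  set q := ⨆ x, g x with hq
  rcases eq_or_ne p 0 with hp0 | hp0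
  · simp [ENNReal.iSup_eq_zero.1 hp0, ENNReal.zero_rpow_of_pos ha]
  rcases eq_or_ne q 0 with hq0 | hq0
  · simp [ENNReal.iSup_eq_zero.1 hq0, ENNReal.zero_rpow_of_pos hb]
  have hnorm (x y : ℝ) : (p⁻¹ * f x) ^ a * (q⁻¹ * g y) ^ b ≤
      (p⁻¹ ^ a * q⁻¹ ^ b) * h (a * x + b * y) := by
    rw [ENNReal.mul_rpow_of_nonneg _ _ ha.le, ENNReal.mul_rpow_of_nonneg _ _ hb.le,
      mul_mul_mul_comm]
    gcongr
    exact hfgh x y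
  have hsum := ofReal_mul_lintegral_add_le_of_iSup_eq_one ha hb hab (hf.const_mul p⁻¹)
    (hg.const_mul q⁻¹) (hh.const_mul (p⁻¹ ^ a * q⁻¹ ^ b))
    (by rw [← ENNReal.mul_iSup, ← hp, ENNReal.inv_mul_cancel hp0 hf_top])
    (by rw [← ENNReal.mul_iSup, ← hq, ENNReal.inv_mul_cancel hq0 hg_top]) hnorm
  have hprod := (ennreal_rpow_mul_rpow_le_add ha hb hab _ _).trans hsum
  rw [lintegral_const_mul _ hf, lintegral_const_mul _ hg, lintegral_const_mul _ hh,
    ENNReal.mul_rpow_of_nonneg _ _ ha.le, ENNReal.mul_rpow_of_nonneg _ _ hb.le,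
    mul_mul_mul_comm] at hprod
  refine (ENNReal.mul_le_mul_iff_right (mul_ne_zero ?_ ?_) (ENNReal.mul_ne_top ?_ ?_)).1 hprod
  all_goals simp [ha, hb, hp0, hq0, hf_top, hg_top, ENNReal.rpow_eq_zero_iff,
    ENNReal.rpow_eq_top_iff]

theorem lintegral_eq_iSup_lintegral_min_natCast {X : Type*} [MeasurableSpace X] (μ : Measure X)
    {f : X → ℝ≥0∞} (hf : Measurable f) :
    ∫⁻ x, f x ∂μ = ⨆ N : ℕ, ∫⁻ x, min (f x) N ∂μ := by
  rw [← lintegral_iSup (fun N => hf.min measurable_const)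
    fun M N hMN x => min_le_min_left _ (Nat.cast_le.2 hMN)]
  refine lintegral_congr fun x => ?_
  rw [← inf_iSup_eq, ENNReal.iSup_natCast, inf_top_eq]

theorem prekopa_leindler (ha : 0 < a) (hb : 0 < b) (hab : a + b = 1) (hf : Measurable f)
    (hg : Measurable g) (hh : Measurable h)
    (hfgh : ∀ x y, f x ^ a * g y ^ b ≤ h (a * x + b * y)) :
    (∫⁻ x, f x) ^ a * (∫⁻ x, g x) ^ b ≤ ∫⁻ x, h x := by
  have hbdd (k : ℝ → ℝ≥0∞) (N : ℕ) : ⨆ x, min (k x) N ≠ ∞ :=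
    ((iSup_le fun x => min_le_right _ _).trans_lt (ENNReal.natCast_lt_top N)).ne
  have htrunc (M N : ℕ) : (∫⁻ x, min (f x) M) ^ a * (∫⁻ x, min (g x) N) ^ b ≤ ∫⁻ x, h x :=
    prekopa_leindler_of_iSup_ne_top ha hb hab (hf.min measurable_const) (hg.min measurable_const)
      hh (hbdd f M) (hbdd g N) fun x y => (mul_le_mul'
        (ENNReal.rpow_le_rpow (min_le_left _ _) ha.le)
        (ENNReal.rpow_le_rpow (min_le_left _ _) hb.le)).trans (hfgh x y)
  have hrpow {c : ℝ} (hc : 0 < c) (I : ℕ → ℝ≥0∞) : (⨆ N, I N) ^ c = ⨆ N, I N ^ c :=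
    (ENNReal.orderIsoRpow c hc).map_iSup I
  rw [lintegral_eq_iSup_lintegral_min_natCast _ hf, lintegral_eq_iSup_lintegral_min_natCast _ hg,
    hrpow ha, hrpow hb, ENNReal.iSup_mul]
  simp_rw [ENNReal.mul_iSup]
  exact iSup₂_le htrunc

end PrekopaLeindler

/-- Maurey's property `τ`: the infimum-convolution inequality for the measure `μ` and the cost
`w`. With `F = exp f` and `G = exp (-g)` the pointwise condition says that `f` is at most the
infimum convolution of `g` with `w`; it is stated multiplicatively so that `F` and `G` may vanish
or be infinite. -/
def InfConvProperty {X : Type*} [MeasurableSpace X] (μ : Measure X) (w : X → X → ℝ) : Prop :=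
  ∀ F G : X → ℝ≥0∞, Measurable F → Measurable G →
    (∀ x y, F x * G y ≤ ENNReal.ofReal (exp (w x y))) → (∫⁻ x, F x ∂μ) * ∫⁻ x, G x ∂μ ≤ 1

namespace InfConvProperty

variable {X Y : Type*} [MeasurableSpace X] [MeasurableSpace Y] {μ : Measure X} {ν : Measure Y}

theorem map {w : Y → Y → ℝ} {T : X → Y} (hT : Measurable T)
    (hμ : InfConvProperty μ fun x y => w (T x) (T y)) : InfConvProperty (μ.map T) w := by
  intro F G hF hG hFG
  rw [lintegral_map hF hT, lintegral_map hG hT]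
  exact hμ _ _ (hF.comp hT) (hG.comp hT) fun x y => hFG (T x) (T y)

theorem of_map {w : Y → Y → ℝ} {T : X → Y} (hT : MeasurableEmbedding T)
    (hμ : InfConvProperty (μ.map T) w) : InfConvProperty μ fun x y => w (T x) (T y) := by
  intro F G hF hG hFG
  have key := hμ _ _ (hT.measurable_extend hF (measurable_const (a := 0)))
    (hT.measurable_extend hG (measurable_const (a := 0))) fun u v => ?_
  · simpa only [hT.lintegral_map, hT.injective.extend_apply] using key
  by_cases hu : ∃ x, T x = u
  · by_cases hv : ∃ y, T y = v
    · obtain ⟨x, rfl⟩ := hu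
      obtain ⟨y, rfl⟩ := hv
      simpa only [hT.injective.extend_apply] using hFG x y
    · simp [Function.extend_apply' _ _ _ hv]
  · simp [Function.extend_apply' _ _ _ hu]

theorem prod [SFinite ν] {v : X → X → ℝ} {w : Y → Y → ℝ} (hμ : InfConvProperty μ v)
    (hν : InfConvProperty ν w) :
    InfConvProperty (μ.prod ν) fun p q => v p.1 q.1 + w p.2 q.2 := by
  intro F G hF hG hFG
  rw [lintegral_prod _ hF.aemeasurable, lintegral_prod _ hG.aemeasurable]
  refine hμ _ _ hF.lintegral_prod_right' hG.lintegral_prod_right' fun a b => ?_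
  set e := ENNReal.ofReal (exp (v a b)) with he
  have he_ne : e ≠ 0 := by simp [he, exp_pos]
  have hFa : Measurable fun y => F (a, y) := hF.comp measurable_prodMk_left
  have hsection := hν (fun x => e⁻¹ * F (a, x)) (fun y => G (b, y)) (hFa.const_mul _)
    (hG.comp measurable_prodMk_left) fun x y => by
      rw [mul_assoc, ENNReal.inv_mul_le_iff he_ne ENNReal.ofReal_ne_top,
        ← ENNReal.ofReal_mul (exp_pos _).le, ← exp_add]
      exact hFG (a, x) (b, y)
  rwa [lintegral_const_mul _ hFa, mul_assoc, ENNReal.inv_mul_le_iff he_ne ENNReal.ofReal_ne_top,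
    mul_one] at hsection

theorem pi {n : ℕ} {X : Fin n → Type*} [∀ i, MeasurableSpace (X i)] {μ : ∀ i, Measure (X i)}
    [∀ i, SigmaFinite (μ i)] {w : ∀ i, X i → X i → ℝ} (hμ : ∀ i, InfConvProperty (μ i) (w i)) :
    InfConvProperty (Measure.pi μ) fun x y => ∑ i, w i (x i) (y i) := by
  induction n with
  | zero =>
    intro F G _ _ hFG
    simpa [Measure.pi_of_empty μ default] using hFG default default
  | succ n ih =>
    have e := (measurePreserving_piFinSuccAbove μ 0).symm
    rw [← e.map_eq]
    simp_rw [Fin.sum_univ_succ]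
    exact map e.measurable ((hμ 0).prod (ih fun i => hμ i.succ))

theorem measure_mul_measure_le {w : X → X → ℝ} (hμ : InfConvProperty μ w) {A E : Set X}
    (hA : MeasurableSet A) (hE : MeasurableSet E) {s : ℝ} (h : ∀ x ∈ A, ∀ y ∈ E, s ≤ w x y) :
    μ A * μ E ≤ ENNReal.ofReal (exp (-s)) := by
  have he_ne : ENNReal.ofReal (exp s) ≠ 0 := by simp [exp_pos]
  have key := hμ (A.indicator fun _ => ENNReal.ofReal (exp s)) (E.indicator fun _ => 1)
    (measurable_const.indicator hA) (measurable_const.indicator hE) fun x y => by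
      by_cases hx : x ∈ A
      · by_cases hy : y ∈ E
        · simpa [hx, hy] using ENNReal.ofReal_le_ofReal (exp_le_exp.2 (h x hx y hy))
        · simp [hy]
      · simp [hx]
  rw [lintegral_indicator_const hA, lintegral_indicator_const hE, one_mul, mul_assoc] at key
  rwa [exp_neg, ENNReal.ofReal_inv_of_pos (exp_pos s), ← mul_one (_⁻¹),
    ← ENNReal.mul_le_iff_le_inv he_ne ENNReal.ofReal_ne_top]

theorem measure_mul_measure_compl_add_le [TopologicalSpace X] [AddGroup X]
    [IsTopologicalAddGroup X] [T2Space X] [OpensMeasurableSpace X]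
    [μ.InnerRegularCompactLTTop] [IsFiniteMeasure μ] {w : X → X → ℝ} (hμ : InfConvProperty μ w)
    {A V : Set X} (hA : MeasurableSet A) (hV : IsCompact V) {s : ℝ}
    (h : ∀ x ∈ A, ∀ y, -x + y ∉ V → s ≤ w x y) :
    μ A * μ (A + V)ᶜ ≤ ENNReal.ofReal (exp (-s)) := by
  rw [hA.measure_eq_iSup_isCompact_of_ne_top (measure_ne_top μ A)]
  simp_rw [ENNReal.iSup_mul]
  refine iSup₂_le fun S hS => iSup_le fun hSc => ?_
  calc μ S * μ (A + V)ᶜ ≤ μ S * μ (S + V)ᶜ := by gcongr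
    _ ≤ ENNReal.ofReal (exp (-s)) := by
      refine hμ.measure_mul_measure_le hSc.measurableSet (hSc.add hV).measurableSet.compl
        fun x hx y hy => h x (hS hx) y fun hxy => hy ⟨x, hx, -x + y, hxy, add_neg_cancel_left x y⟩

theorem withDensity_of_midpoint {ρ : ℝ → ℝ≥0∞} (hρ : Measurable ρ) (hρ1 : ∫⁻ s, ρ s ≤ 1)
    {w : ℝ → ℝ → ℝ}
    (h : ∀ s t, ρ s * ρ t * ENNReal.ofReal (exp (w s t)) ≤ ρ ((s + t) / 2) ^ 2) :
    InfConvProperty (volume.withDensity ρ) w := by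
  intro F G hF hG hFG
  have hsq (x : ℝ≥0∞) : (x ^ 2) ^ (1 / 2 : ℝ) = x := by
    rw [← ENNReal.rpow_two, ← ENNReal.rpow_mul, mul_one_div_cancel two_ne_zero, ENNReal.rpow_one]
  have hmid (s t : ℝ) : (ρ s * F s) ^ (1 / 2 : ℝ) * (ρ t * G t) ^ (1 / 2 : ℝ) ≤
      ρ (1 / 2 * s + 1 / 2 * t) := by
    rw [← ENNReal.mul_rpow_of_nonneg _ _ one_half_pos.le, ← hsq (ρ (1 / 2 * s + _))]
    refine ENNReal.rpow_le_rpow ?_ one_half_pos.le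
    calc ρ s * F s * (ρ t * G t) = ρ s * ρ t * (F s * G t) := by ring
      _ ≤ ρ s * ρ t * ENNReal.ofReal (exp (w s t)) := by gcongr; exact hFG s t
      _ ≤ ρ (1 / 2 * s + 1 / 2 * t) ^ 2 := by
        convert h s t using 3
        ring
  have hPL := prekopa_leindler one_half_pos one_half_pos (add_halves 1) (hρ.mul hF) (hρ.mul hG) hρ
    hmid
  rw [lintegral_withDensity_eq_lintegral_mul _ hρ hF,
    lintegral_withDensity_eq_lintegral_mul _ hρ hG]
  rw [← ENNReal.mul_rpow_of_nonneg _ _ one_half_pos.le] at hPL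
  refine (ENNReal.rpow_le_rpow_iff one_half_pos).1 (hPL.trans ?_)
  rwa [ENNReal.one_rpow]

end InfConvProperty

section Logit

/-- The log-odds `log (u / (1 - u))` of a probability `u ∈ (0, 1)`. -/
def logit (u : ℝ) : ℝ := log u - log (1 - u)

theorem hasDerivAt_logit {u : ℝ} (hu : u ∈ Ioo 0 1) : HasDerivAt logit (u * (1 - u))⁻¹ u := by
  have h0 : u ≠ 0 := hu.1.ne'
  have h1 : 1 - u ≠ 0 := (sub_pos.2 hu.2).ne'
  refine ((hasDerivAt_log h0).sub (((hasDerivAt_id u).const_sub 1).log h1)).congr_deriv ?_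
  simp only [id]
  field_simp
  ring

/-- The transport cost `min (t ^ 2) |t|`, quadratic for small and linear for large increments. -/
def twoLevelCost (t : ℝ) : ℝ := min (t ^ 2) |t|

theorem exp_sq_div_le_cosh_sq {d : ℝ} (hd : |d| ≤ 4) : exp (d ^ 2 / 32) ≤ cosh (d / 4) ^ 2 := by
  have hd2 : d ^ 2 ≤ 4 ^ 2 := sq_le_sq.2 (by simpa using hd)
  have hexp : exp (d ^ 2 / 32) ≤ 1 + d ^ 2 / 16 := by
    have h := Real.exp_bound' (x := d ^ 2 / 32) (by positivity) (by linarith) (n := 1) one_pos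
    norm_num at h
    linarith
  have hsinh : (d / 4) ^ 2 ≤ sinh (d / 4) ^ 2 := by
    rw [sq_le_sq, abs_sinh]
    exact self_le_sinh_iff.2 (abs_nonneg _)
  calc exp (d ^ 2 / 32) ≤ 1 + (d / 4) ^ 2 := by linarith
    _ ≤ 1 + sinh (d / 4) ^ 2 := by gcongr
    _ = cosh (d / 4) ^ 2 := (cosh_sq' _).symm

theorem exp_abs_div_le_cosh_sq {d : ℝ} (hd : 4 ≤ |d|) : exp (|d| / 32) ≤ cosh (d / 4) ^ 2 := by
  have hfour : 4 ≤ exp (15 * |d| / 32) := by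
    have hexp1 := Real.exp_one_gt_d9
    calc (4 : ℝ) ≤ (exp 1) ^ 2 * (1 - 1 / 8) := by nlinarith
      _ ≤ exp 1 ^ 2 * exp (-(1 / 8)) := by gcongr; exact Real.one_sub_le_exp_neg _
      _ = exp (15 / 8) := by rw [← Real.exp_nat_mul, ← Real.exp_add]; norm_num
      _ ≤ exp (15 * |d| / 32) := exp_le_exp.2 (by linarith)
  calc exp (|d| / 32) ≤ exp (|d| / 32) * (exp (15 * |d| / 32) / 4) :=
        le_mul_of_one_le_right (exp_pos _).le (by linarith)
    _ = (exp |d / 4| / 2) ^ 2 := by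
        rw [abs_div, div_pow, ← Real.exp_nat_mul, ← mul_div_assoc, ← Real.exp_add]
        norm_num
        ring_nf
    _ ≤ cosh (d / 4) ^ 2 := by
        gcongr
        rw [← cosh_abs, cosh_eq]
        gcongr
        exact le_add_of_nonneg_right (exp_pos _).le

theorem exp_twoLevelCost_div_le_cosh_sq (d : ℝ) :
    exp (twoLevelCost d / 32) ≤ cosh (d / 4) ^ 2 := by
  rcases le_total |d| 4 with hd | hd
  · refine (exp_le_exp.2 ?_).trans (exp_sq_div_le_cosh_sq hd)
    gcongr
    exact min_le_left _ _
  · refine (exp_le_exp.2 ?_).trans (exp_abs_div_le_cosh_sq hd)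
    gcongr
    exact min_le_right _ _

theorem logit_one_sub_cos_div_two (s : ℝ) :
    logit ((1 - cos s) / 2) = 2 * (log (sin (s / 2)) - log (cos (s / 2))) := by
  have hcos : cos s = 2 * cos (s / 2) ^ 2 - 1 := by rw [← cos_two_mul]; ring_nf
  have hsq := sin_sq_add_cos_sq (s / 2)
  rw [logit, show (1 - cos s) / 2 = sin (s / 2) ^ 2 by linarith,
    show 1 - sin (s / 2) ^ 2 = cos (s / 2) ^ 2 by linarith, log_pow, log_pow]
  push_cast
  ring

theorem sin_mul_sin_mul_cosh_sq {s t : ℝ} (hs : s ∈ Ioo 0 π) (ht : t ∈ Ioo 0 π) :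
    sin s * sin t * cosh ((logit ((1 - cos s) / 2) - logit ((1 - cos t) / 2)) / 4) ^ 2 =
      sin ((s + t) / 2) ^ 2 := by
  have half_mem {u : ℝ} (hu : u ∈ Ioo 0 π) : 0 < sin (u / 2) ∧ 0 < cos (u / 2) :=
    ⟨sin_pos_of_mem_Ioo ⟨by linarith [hu.1], by linarith [hu.1, hu.2]⟩,
      cos_pos_of_mem_Ioo ⟨by linarith [hu.1, pi_pos], by linarith [hu.2]⟩⟩
  obtain ⟨hss, hcs⟩ := half_mem hs
  obtain ⟨hst, hct⟩ := half_mem ht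
  have sin_double (u : ℝ) : sin u = 2 * sin (u / 2) * cos (u / 2) := by
    rw [← sin_two_mul, mul_div_cancel₀ u two_ne_zero]
  have hcosh (x : ℝ) : cosh x ^ 2 = (1 + cosh (2 * x)) / 2 := by
    rw [cosh_two_mul, sinh_sq]
    ring
  have hlog : 2 * ((logit ((1 - cos s) / 2) - logit ((1 - cos t) / 2)) / 4) =
      log (sin (s / 2) * cos (t / 2) / (cos (s / 2) * sin (t / 2))) := by
    rw [logit_one_sub_cos_div_two, logit_one_sub_cos_div_two,
      log_div (by positivity) (by positivity), log_mul hss.ne' hct.ne', log_mul hcs.ne' hst.ne']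
    ring
  rw [hcosh, hlog, cosh_log (by positivity), add_div s, sin_add, sin_double s, sin_double t]
  field_simp
  ring

theorem one_sub_cos_div_two_image_Ioo : (fun s => (1 - cos s) / 2) '' Ioo 0 π = Ioo 0 1 := by
  have hcos : cos '' Ioo 0 π = Ioo (-1) 1 := cosPartialHomeomorph.image_source_eq_target
  simp_rw [div_eq_mul_inv]
  rw [← image_image (fun v : ℝ => (1 - v) * 2⁻¹) cos, hcos, ← image_image (· * (2⁻¹ : ℝ)),
    image_const_sub_Ioo, image_mul_right_Ioo _ _ (by norm_num)]
  norm_num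

/-- The density of the sine law on `(0, π)`, the image of the uniform law on `(0, 1)` under the
inverse of `s ↦ (1 - cos s) / 2`. -/
def sineDensity : ℝ → ℝ≥0∞ := (Ioo 0 π).indicator fun s => ENNReal.ofReal (sin s / 2)

theorem measurable_sineDensity : Measurable sineDensity :=
  Measurable.indicator (by fun_prop) measurableSet_Ioo

theorem map_withDensity_sineDensity :
    (volume.withDensity sineDensity).map (fun s => (1 - cos s) / 2) =
      volume.restrict (Ioo 0 1) := by
  have hmeas : Measurable fun s => (1 - cos s) / 2 := by fun_prop
  have hmono : MonotoneOn (fun s => (1 - cos s) / 2) (Ioo 0 π) := fun s hs t ht hst => by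
    have hcos : cos t ≤ cos s := cos_le_cos_of_nonneg_of_le_pi hs.1.le ht.2.le hst
    exact div_le_div_of_nonneg_right (sub_le_sub_left hcos 1) zero_le_two
  have hderiv (s : ℝ) : HasDerivAt (fun s => (1 - cos s) / 2) (sin s / 2) s := by
    simpa using ((hasDerivAt_cos s).const_sub 1).div_const 2
  refine Measure.ext_of_lintegral _ fun F hF => ?_
  rw [lintegral_map hF hmeas, sineDensity, withDensity_indicator measurableSet_Ioo,
    ← one_sub_cos_div_two_image_Ioo]
  refine (lintegral_withDensity_eq_lintegral_mul _ (by fun_prop) (hF.comp hmeas)).trans ?_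
  exact (lintegral_image_eq_lintegral_deriv_mul_of_monotoneOn measurableSet_Ioo
    (fun s _ => (hderiv s).hasDerivWithinAt) hmono F).symm

theorem lintegral_sineDensity : ∫⁻ s, sineDensity s = 1 := by
  have h := congrArg (· univ) map_withDensity_sineDensity
  simpa [Measure.map_apply, (by fun_prop : Measurable fun s => (1 - cos s) / 2)] using h

theorem infConvProperty_sineDensity :
    InfConvProperty (volume.withDensity sineDensity) fun s t =>
      twoLevelCost (logit ((1 - cos s) / 2) - logit ((1 - cos t) / 2)) / 32 := by
  refine .withDensity_of_midpoint measurable_sineDensity lintegral_sineDensity.le fun s t => ?_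
  by_cases hs : s ∈ Ioo 0 π
  · by_cases ht : t ∈ Ioo 0 π
    · have hst : (s + t) / 2 ∈ Ioo 0 π := ⟨by linarith [hs.1, ht.1], by linarith [hs.2, ht.2]⟩
      have hsin {u : ℝ} (hu : u ∈ Ioo 0 π) : 0 < sin u := sin_pos_of_mem_Ioo hu
      have hs0 := hsin hs
      have ht0 := hsin ht
      have hst0 := hsin hst
      simp only [sineDensity, indicator_of_mem, hs, ht, hst]
      rw [← ENNReal.ofReal_mul (by positivity), ← ENNReal.ofReal_mul (by positivity),
        ← ENNReal.ofReal_pow (by positivity)]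
      refine ENNReal.ofReal_le_ofReal ?_
      calc _ ≤ sin s / 2 * (sin t / 2) *
            cosh ((logit ((1 - cos s) / 2) - logit ((1 - cos t) / 2)) / 4) ^ 2 := by
            gcongr
            exact exp_twoLevelCost_div_le_cosh_sq _
        _ = (sin ((s + t) / 2) / 2) ^ 2 := by
            rw [div_pow, ← sin_mul_sin_mul_cosh_sq hs ht]
            ring
    · simp [sineDensity, ht]
  · simp [sineDensity, hs]

theorem infConvProperty_restrict_Ioo :
    InfConvProperty (volume.restrict (Ioo 0 1)) fun u v =>
      twoLevelCost (logit u - logit v) / 32 := by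
  rw [← map_withDensity_sineDensity]
  exact .map (by fun_prop) infConvProperty_sineDensity

theorem cdf_mem_Ioo {μ : Measure ℝ} (hmono : StrictMono (cdf μ)) (x : ℝ) : cdf μ x ∈ Ioo 0 1 :=
  ⟨(cdf_nonneg μ (x - 1)).trans_lt (hmono (sub_one_lt x)),
    (hmono (lt_add_one x)).trans_le (cdf_le_one μ (x + 1))⟩

theorem map_cdf_eq_restrict_Ioo {μ : Measure ℝ} [IsProbabilityMeasure μ]
    (hcont : Continuous (cdf μ)) (hmono : StrictMono (cdf μ)) :
    μ.map (cdf μ) = volume.restrict (Ioo 0 1) := by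
  have hmem := cdf_mem_Ioo hmono
  refine Measure.ext_of_Iic _ _ fun u => ?_
  rw [Measure.map_apply hcont.measurable measurableSet_Iic,
    Measure.restrict_apply measurableSet_Iic]
  rcases le_or_gt u 0 with hu0 | hu0
  · have hpre : cdf μ ⁻¹' Iic u = ∅ :=
      eq_empty_of_forall_notMem fun x hx => (hu0.trans_lt (hmem x).1).not_ge hx
    have hinter : Iic u ∩ Ioo 0 1 = ∅ :=
      eq_empty_of_forall_notMem fun v hv => (hu0.trans_lt hv.2.1).not_ge hv.1
    rw [hpre, hinter, measure_empty, measure_empty]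
  rcases le_or_gt 1 u with hu1 | hu1
  · have hpre : cdf μ ⁻¹' Iic u = univ := eq_univ_of_forall fun x => (hmem x).2.le.trans hu1
    have hinter : Iic u ∩ Ioo 0 1 = Ioo 0 1 := inter_eq_right.2 fun v hv => hv.2.le.trans hu1
    simp [hpre, hinter]
  obtain ⟨x, rfl⟩ : u ∈ range (cdf μ) := mem_range_of_exists_le_of_exists_ge hcont
    ((tendsto_cdf_atBot μ).eventually_le_const hu0).exists
    ((tendsto_cdf_atTop μ).eventually_const_le hu1).exists
  have hpre : cdf μ ⁻¹' Iic (cdf μ x) = Iic x := ext fun y => hmono.le_iff_le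
  have hinter : Iic (cdf μ x) ∩ Ioo 0 1 = Ioc 0 (cdf μ x) :=
    ext fun v => ⟨fun hv => ⟨hv.2.1, hv.1⟩, fun hv => ⟨hv.2, hv.1, hv.2.trans_lt hu1⟩⟩
  rw [hpre, hinter, Real.volume_Ioc, sub_zero, ofReal_cdf]

theorem infConvProperty_logit_cdf {μ : Measure ℝ} [IsProbabilityMeasure μ]
    (hcont : Continuous (cdf μ)) (hmono : StrictMono (cdf μ)) :
    InfConvProperty μ fun x y => twoLevelCost (logit (cdf μ x) - logit (cdf μ y)) / 32 :=
  .of_map (w := fun u v => twoLevelCost (logit u - logit v) / 32)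
    (hcont.measurableEmbedding hmono.injective)
    (map_cdf_eq_restrict_Ioo hcont hmono ▸ infConvProperty_restrict_Ioo)

end Logit

section Density

variable {μ : Measure ℝ} [IsProbabilityMeasure μ] {ρ : ℝ → ℝ}

theorem cdf_eq_setIntegral_density (hμ : μ = volume.withDensity fun x => ENNReal.ofReal (ρ x))
    (hρ : 0 ≤ ρ) (hint : Integrable ρ) (x : ℝ) : cdf μ x = ∫ y in Iic x, ρ y := by
  rw [cdf_eq_real, measureReal_def, hμ, withDensity_apply _ measurableSet_Iic,
    integral_eq_lintegral_of_nonneg_ae (ae_of_all _ hρ) hint.1.restrict]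

theorem one_sub_cdf_eq_setIntegral_density
    (hμ : μ = volume.withDensity fun x => ENNReal.ofReal (ρ x)) (hρ : 0 ≤ ρ)
    (hint : Integrable ρ) (x : ℝ) : 1 - cdf μ x = ∫ y in Ioi x, ρ y := by
  rw [cdf_eq_real, ← probReal_compl_eq_one_sub measurableSet_Iic, compl_Iic, measureReal_def, hμ,
    withDensity_apply _ measurableSet_Ioi,
    integral_eq_lintegral_of_nonneg_ae (ae_of_all _ hρ) hint.1.restrict]

theorem hasDerivAt_cdf (hμ : μ = volume.withDensity fun x => ENNReal.ofReal (ρ x)) (hρ : 0 ≤ ρ)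
    (hint : Integrable ρ) (hcont : Continuous ρ) (x : ℝ) : HasDerivAt (cdf μ) (ρ x) x := by
  refine ((hcont.integral_hasStrictDerivAt 0 x).hasDerivAt.const_add
    (∫ y in Iic 0, ρ y)).congr_of_eventuallyEq (.of_forall fun u => eq_add_of_sub_eq' ?_)
  rw [cdf_eq_setIntegral_density hμ hρ hint]
  exact intervalIntegral.integral_Iic_sub_Iic hint.integrableOn hint.integrableOn

theorem cdf_mul_one_sub_cdf_le_setIntegral_Ioi_abs
    (hμ : μ = volume.withDensity fun x => ENNReal.ofReal (ρ x)) (hρ : 0 ≤ ρ)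
    (hint : Integrable ρ) (heven : Function.Even ρ) (x : ℝ) :
    cdf μ x * (1 - cdf μ x) ≤ ∫ y in Ioi |x|, ρ y := by
  have h0 := cdf_nonneg μ x
  have h1 := cdf_le_one μ x
  rcases le_total 0 x with hx | hx
  · rw [abs_of_nonneg hx, ← one_sub_cdf_eq_setIntegral_density hμ hρ hint]
    exact mul_le_of_le_one_left (sub_nonneg.2 h1) h1
  · have hsymm : ∫ y in Ioi |x|, ρ y = ∫ y in Iic x, ρ y := by
      rw [abs_of_nonpos hx, ← integral_comp_neg_Iic]
      simp_rw [heven.eq]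
    rw [hsymm, ← cdf_eq_setIntegral_density hμ hρ hint]
    exact mul_le_of_le_one_right h0 (sub_le_self _ h0)

theorem strictMono_cdf (hμ : μ = volume.withDensity fun x => ENNReal.ofReal (ρ x))
    (hρ : ∀ x, 0 < ρ x) (hint : Integrable ρ) (hcont : Continuous ρ) : StrictMono (cdf μ) :=
  strictMono_of_hasDerivAt_pos (hasDerivAt_cdf hμ (fun x => (hρ x).le) hint hcont) hρ

theorem abs_sub_le_mul_abs_logit_sub_logit {U : ℝ → ℝ} {B x y : ℝ} (hB0 : 0 ≤ B)
    (hU : ∀ z, HasDerivAt U (ρ z) z) (hU01 : ∀ z, U z ∈ Ioo 0 1)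
    (hB : ∀ z ∈ uIcc x y, U z * (1 - U z) ≤ B * ρ z) :
    |x - y| ≤ B * |logit (U x) - logit (U y)| := by
  wlog hxy : y < x generalizing x y
  · rcases (not_lt.1 hxy).eq_or_lt with rfl | hlt
    · simp
    · rw [abs_sub_comm x, abs_sub_comm (logit _)]
      exact this (uIcc_comm x y ▸ hB) hlt
  have hderiv (z : ℝ) : HasDerivAt (logit ∘ U) ((U z * (1 - U z))⁻¹ * ρ z) z :=
    (hasDerivAt_logit (hU01 z)).comp z (hU z)
  obtain ⟨z, hz, hslope⟩ := exists_hasDerivAt_eq_slope (logit ∘ U) _ hxy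
    (fun z _ => (hderiv z).continuousAt.continuousWithinAt) fun z _ => hderiv z
  have hvar : 0 < U z * (1 - U z) := mul_pos (hU01 z).1 (sub_pos.2 (hU01 z).2)
  have hpos : 0 < x - y := sub_pos.2 hxy
  have hslope_ge : 1 ≤ B * ((logit (U x) - logit (U y)) / (x - y)) := by
    have hz' : z ∈ uIcc x y := uIcc_of_ge hxy.le ▸ Ioo_subset_Icc_self hz
    calc 1 ≤ B * ρ z / (U z * (1 - U z)) := (one_le_div hvar).2 (hB z hz')
      _ = B * ((U z * (1 - U z))⁻¹ * ρ z) := by ring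
      _ = _ := by rw [hslope]; rfl
  rw [← mul_div_assoc, one_le_div hpos] at hslope_ge
  rw [abs_of_pos hpos]
  exact hslope_ge.trans (mul_le_mul_of_nonneg_left (le_abs_self _) hB0)

theorem abs_sub_le_mul_abs_logit_cdf_sub
    (hμ : μ = volume.withDensity fun x => ENNReal.ofReal (ρ x)) (hρ : ∀ x, 0 < ρ x)
    (hint : Integrable ρ) (hcont : Continuous ρ) (heven : Function.Even ρ) {B : ℝ → ℝ}
    (hB0 : ∀ z ≥ 0, 0 ≤ B z) (hBmono : MonotoneOn B (Ici 0))
    (htail : ∀ z ≥ 0, ∫ y in Ioi z, ρ y ≤ B z * ρ z) (x y : ℝ) :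
    |x - y| ≤ B (max |x| |y|) * |logit (cdf μ x) - logit (cdf μ y)| := by
  have hρ0 : 0 ≤ ρ := fun x => (hρ x).le
  have hmax : 0 ≤ max |x| |y| := (abs_nonneg x).trans (le_max_left _ _)
  refine abs_sub_le_mul_abs_logit_sub_logit (hB0 _ hmax) (hasDerivAt_cdf hμ hρ0 hint hcont)
    (cdf_mem_Ioo (strictMono_cdf hμ hρ hint hcont)) fun z hz => ?_
  have hz' : |z| ≤ max |x| |y| := by
    rcases mem_uIcc.1 hz with ⟨h1, h2⟩ | ⟨h1, h2⟩
    · exact abs_le_max_abs_abs h1 h2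
    · exact max_comm |x| |y| ▸ abs_le_max_abs_abs h1 h2
  have heven_abs : ρ |z| = ρ z := by
    rcases abs_choice z with h | h
    · rw [h]
    · rw [h, heven.eq]
  calc cdf μ z * (1 - cdf μ z) ≤ ∫ y in Ioi |z|, ρ y :=
        cdf_mul_one_sub_cdf_le_setIntegral_Ioi_abs hμ hρ0 hint heven z
    _ ≤ B |z| * ρ |z| := htail _ (abs_nonneg z)
    _ = B |z| * ρ z := by rw [heven_abs]
    _ ≤ B (max |x| |y|) * ρ z :=
      mul_le_mul_of_nonneg_right (hBmono (abs_nonneg z) hmax hz') (hρ0 z)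

end Density

section NuAlpha

variable {α : ℝ}

theorem integrable_exp_neg_mul_abs_rpow {b : ℝ} (hα : 0 < α) (hb : 0 < b) :
    Integrable fun x : ℝ => exp (-b * |x| ^ α) := by
  refine .of_integral_ne_zero ?_
  rw [integral_comp_abs (f := fun x => exp (-b * x ^ α)), integral_exp_neg_mul_rpow hα hb]
  have := Gamma_pos_of_pos (by positivity : 0 < 1 / α + 1)
  positivity

theorem integrable_exp_neg_abs_rpow (hα : 0 < α) : Integrable fun x : ℝ => exp (-|x| ^ α) := by
  simpa using integrable_exp_neg_mul_abs_rpow hα one_pos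

theorem integral_exp_neg_abs_rpow_pos (hα : 0 < α) : 0 < ∫ x : ℝ, exp (-|x| ^ α) :=
  integral_exp_pos (integrable_exp_neg_abs_rpow hα)

/-- The density of `ν_α` with respect to Lebesgue measure. -/
def nuDensity (α x : ℝ) : ℝ := (∫ y, exp (-|y| ^ α))⁻¹ * exp (-|x| ^ α)

theorem nuDensity_pos (hα : 0 < α) (x : ℝ) : 0 < nuDensity α x :=
  mul_pos (inv_pos.2 (integral_exp_neg_abs_rpow_pos hα)) (exp_pos _)

theorem continuous_nuDensity (hα : 0 < α) : Continuous (nuDensity α) :=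
  ((continuous_abs.rpow_const fun _ => Or.inr hα.le).neg.rexp).const_mul _

theorem integrable_nuDensity (hα : 0 < α) : Integrable (nuDensity α) :=
  (integrable_exp_neg_abs_rpow hα).const_mul _

theorem even_nuDensity : Function.Even (nuDensity α) := fun x => by
  simp only [nuDensity, abs_neg]

theorem nuKernel_univ (hα : 0 < α) : nuKernel α univ = ENNReal.ofReal (∫ x, exp (-|x| ^ α)) := by
  rw [nuKernel, withDensity_apply _ .univ, setLIntegral_univ,
    ofReal_integral_eq_lintegral_ofReal (integrable_exp_neg_abs_rpow hα)
      (ae_of_all _ fun x => (exp_pos _).le)]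

theorem nuAlpha_eq_withDensity (hα : 0 < α) :
    nuAlpha α = volume.withDensity fun x => ENNReal.ofReal (nuDensity α x) := by
  have hY := integral_exp_neg_abs_rpow_pos hα
  rw [nuAlpha, nuKernel_univ hα, nuKernel, ← withDensity_smul _ (by fun_prop)]
  congr 1 with x
  rw [Pi.smul_apply, smul_eq_mul, nuDensity, ENNReal.ofReal_mul (inv_pos.2 hY).le,
    ENNReal.ofReal_inv_of_pos hY]

theorem isProbabilityMeasure_nuAlpha (hα : 0 < α) : IsProbabilityMeasure (nuAlpha α) := by
  refine ⟨?_⟩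
  rw [nuAlpha, Measure.smul_apply, nuKernel_univ hα, smul_eq_mul]
  exact ENNReal.inv_mul_cancel (by simpa using integral_exp_neg_abs_rpow_pos hα)
    ENNReal.ofReal_ne_top

theorem isProbabilityMeasure_nuPi (hα : 0 < α) (n : ℕ) : IsProbabilityMeasure (nuPi α n) := by
  have := isProbabilityMeasure_nuAlpha hα
  unfold nuPi
  infer_instance

theorem infConvProperty_nuAlpha (hα : 0 < α) :
    InfConvProperty (nuAlpha α) fun x y =>
      twoLevelCost (logit (cdf (nuAlpha α) x) - logit (cdf (nuAlpha α) y)) / 32 := by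
  have := isProbabilityMeasure_nuAlpha hα
  have hμ := nuAlpha_eq_withDensity hα
  have hderiv := hasDerivAt_cdf hμ (fun x => (nuDensity_pos hα x).le) (integrable_nuDensity hα)
    (continuous_nuDensity hα)
  exact infConvProperty_logit_cdf (continuous_iff_continuousAt.2 fun x => (hderiv x).continuousAt)
    (strictMono_cdf hμ (nuDensity_pos hα) (integrable_nuDensity hα) (continuous_nuDensity hα))

theorem setIntegral_Ioi_le_of_le_deriv {f g g' : ℝ → ℝ} {a : ℝ} (hf : IntegrableOn f (Ioi a))
    (hg : ContinuousOn g (Ici a)) (hg' : ∀ x ∈ Ioi a, HasDerivAt g (g' x) x)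
    (hfg : ∀ x ∈ Ioi a, f x ≤ g' x) (hg0 : ∀ x ∈ Ici a, g x ≤ 0) :
    ∫ x in Ioi a, f x ≤ -g a := by
  refine le_of_tendsto (intervalIntegral_tendsto_integral_Ioi a hf tendsto_id)
    ((eventually_ge_atTop a).mono fun b hb => ?_)
  have hftc := intervalIntegral.integral_le_sub_of_hasDeriv_right_of_le hb
    (hg.mono Icc_subset_Ici_self) (fun x hx => (hg' x hx.1).hasDerivWithinAt)
    ((integrableOn_Icc_iff_integrableOn_Ioc (by finiteness)).2 (hf.mono_set Ioc_subset_Ioi_self))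
    fun x hx => hfg x hx.1
  simp only [id] at hftc ⊢
  linarith [hg0 b hb]

theorem hasDerivAt_rpow_mul_exp_neg_rpow {a x : ℝ} (ha : 0 < a) (hx : 0 < x) :
    HasDerivAt (fun x => (a + x) ^ (1 - α) * exp (-x ^ α))
      (-((α * ((a + x) ^ (1 - α) * x ^ (α - 1)) - (1 - α) * (a + x) ^ (-α)) * exp (-x ^ α))) x := by
  have hpow : HasDerivAt (fun x => (a + x) ^ (1 - α)) ((1 - α) * (a + x) ^ (-α)) x := by
    simpa using ((hasDerivAt_id x).const_add a).rpow_const (p := 1 - α) (.inl (add_pos ha hx).ne')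
  refine (hpow.mul (hasDerivAt_rpow_const (p := α) (.inl hx.ne')).neg.exp).congr_deriv ?_
  simp only [Pi.neg_apply]
  ring

theorem div_two_le_mul_rpow_sub_mul_rpow {a x : ℝ} (hα0 : 0 < α) (hα1 : α ≤ 1)
    (ha : (2 / α) ^ (1 / α) ≤ a) (hx : 0 < x) :
    α / 2 ≤ α * ((a + x) ^ (1 - α) * x ^ (α - 1)) - (1 - α) * (a + x) ^ (-α) := by
  have ha0 : 0 < a := (by positivity : 0 < (2 / α) ^ (1 / α)).trans_le ha
  have hsmall : (a + x) ^ (-α) ≤ α / 2 := by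
    calc (a + x) ^ (-α) ≤ ((2 / α) ^ (1 / α)) ^ (-α) :=
          rpow_le_rpow_of_nonpos (by positivity) (by linarith) (by linarith)
      _ = α / 2 := by
          rw [← rpow_mul (by positivity), mul_neg, one_div_mul_cancel hα0.ne', rpow_neg_one,
            inv_div]
  have hlarge : 1 ≤ (a + x) ^ (1 - α) * x ^ (α - 1) := by
    rw [← neg_sub 1 α, rpow_neg hx.le, ← div_eq_mul_inv, one_le_div (by positivity)]
    exact rpow_le_rpow hx.le (by linarith) (by linarith)
  nlinarith

theorem setIntegral_Ioi_exp_neg_abs_rpow_le {a z : ℝ} (hα0 : 0 < α) (hα1 : α ≤ 1)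
    (ha : (2 / α) ^ (1 / α) ≤ a) (hz : 0 ≤ z) :
    ∫ x in Ioi z, exp (-|x| ^ α) ≤ 2 / α * (a + z) ^ (1 - α) * exp (-|z| ^ α) := by
  have ha0 : 0 < a := (by positivity : 0 < (2 / α) ^ (1 / α)).trans_le ha
  have hpos {x : ℝ} (hx : x ∈ Ici z) : 0 ≤ x := hz.trans hx
  have hcont : Continuous fun x : ℝ => -(2 / α * ((a + x) ^ (1 - α) * exp (-x ^ α))) :=
    (((Continuous.rpow_const (by fun_prop) fun _ => .inr (sub_nonneg.2 hα1)).mul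
      (continuous_rpow_const hα0.le).neg.rexp).const_mul _).neg
  have hbound := setIntegral_Ioi_le_of_le_deriv
    (integrable_exp_neg_abs_rpow hα0).integrableOn hcont.continuousOn
    (fun x hx => ((hasDerivAt_rpow_mul_exp_neg_rpow ha0 (hz.trans_lt hx)).const_mul _).neg)
    (fun x hx => ?_) fun x hx => ?_
  · simpa only [neg_neg, abs_of_nonneg hz, mul_assoc] using hbound
  · have hx0 : 0 < x := hz.trans_lt hx
    rw [abs_of_pos hx0, mul_neg, neg_neg, ← mul_assoc]
    refine le_mul_of_one_le_left (exp_pos _).le ?_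
    calc 1 = 2 / α * (α / 2) := by field_simp
      _ ≤ _ := by gcongr; exact div_two_le_mul_rpow_sub_mul_rpow hα0 hα1 ha hx0
  · have := hpos hx
    exact neg_nonpos.2 (by positivity)

theorem exists_abs_sub_le_mul_abs_logit_cdf_nuAlpha_sub (hα0 : 0 < α) (hα1 : α ≤ 1) :
    ∃ K > 0, ∀ x y : ℝ, |x - y| ≤ K * (1 + max |x| |y|) ^ (1 - α) *
      |logit (cdf (nuAlpha α) x) - logit (cdf (nuAlpha α) y)| := by
  have := isProbabilityMeasure_nuAlpha hα0
  obtain ⟨a, ha1, ha⟩ : ∃ a : ℝ, 1 ≤ a ∧ (2 / α) ^ (1 / α) ≤ a :=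
    ⟨_, le_max_left _ _, le_max_right _ _⟩
  have : 0 ≤ 1 - α := sub_nonneg.2 hα1
  refine ⟨2 / α * a ^ (1 - α), by positivity, abs_sub_le_mul_abs_logit_cdf_sub
    (B := fun z => 2 / α * a ^ (1 - α) * (1 + z) ^ (1 - α))
    (nuAlpha_eq_withDensity hα0) (nuDensity_pos hα0) (integrable_nuDensity hα0)
    (continuous_nuDensity hα0) even_nuDensity (fun z hz => ?_) (fun x hx y _ hxy => ?_)
    fun z hz => ?_⟩
  · positivity
  · have : 0 ≤ x := hx
    beta_reduce
    gcongr
  · have hY := integral_exp_neg_abs_rpow_pos hα0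
    simp only [nuDensity]
    rw [integral_const_mul, mul_left_comm]
    gcongr
    calc ∫ x in Ioi z, exp (-|x| ^ α) ≤ 2 / α * (a + z) ^ (1 - α) * exp (-|z| ^ α) :=
          setIntegral_Ioi_exp_neg_abs_rpow_le hα0 hα1 ha hz
      _ ≤ 2 / α * (a * (1 + z)) ^ (1 - α) * exp (-|z| ^ α) := by
          gcongr
          nlinarith
      _ = 2 / α * a ^ (1 - α) * (1 + z) ^ (1 - α) * exp (-|z| ^ α) := by
          rw [mul_rpow (by positivity) (by positivity)]
          ring

theorem exists_nuAlpha_real_abs_gt_le (hα : 0 < α) :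
    ∃ K ≥ 1, ∀ M ≥ 0, (nuAlpha α).real {x | M < |x|} ≤ K * exp (-M ^ α / 2) := by
  have := isProbabilityMeasure_nuAlpha hα
  have hint : Integrable (fun x => exp (1 / 2 * |x| ^ α)) (nuAlpha α) := by
    rw [nuAlpha_eq_withDensity hα, integrable_withDensity_iff
      (continuous_nuDensity hα).measurable.ennreal_ofReal (by simp)]
    refine ((integrable_exp_neg_mul_abs_rpow hα one_half_pos).const_mul
      (∫ y, exp (-|y| ^ α))⁻¹).congr (ae_of_all _ fun x => ?_)
    beta_reduce
    rw [ENNReal.toReal_ofReal (nuDensity_pos hα x).le, nuDensity, mul_left_comm, ← Real.exp_add]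
    ring_nf
  refine ⟨max 1 (mgf (fun x => |x| ^ α) (nuAlpha α) (1 / 2)), le_max_left _ _, fun M hM => ?_⟩
  calc (nuAlpha α).real {x | M < |x|} ≤ (nuAlpha α).real {x | M ^ α ≤ |x| ^ α} :=
        measureReal_mono fun x hx => rpow_le_rpow hM (le_of_lt hx) hα.le
    _ ≤ exp (-(1 / 2) * M ^ α) * mgf (fun x => |x| ^ α) (nuAlpha α) (1 / 2) :=
        measure_ge_le_exp_mul_mgf _ one_half_pos.le hint
    _ ≤ max 1 (mgf (fun x => |x| ^ α) (nuAlpha α) (1 / 2)) * exp (-M ^ α / 2) := by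
        rw [mul_comm, show -(1 / 2) * M ^ α = -M ^ α / 2 by ring]
        gcongr
        exact le_max_right _ _

end NuAlpha

section LpBall

variable {n : ℕ}

theorem mem_smul_lpBall {p t : ℝ} (hp : 0 < p) (ht : 0 < t) {h : Fin n → ℝ}
    (hh : ∑ i, |h i| ^ p ≤ t ^ p) : h ∈ t • lpBall p n := by
  rw [mem_smul_set_iff_inv_smul_mem₀ ht.ne']
  refine rpow_le_one (Finset.sum_nonneg fun i _ => by positivity) ?_ (by positivity)
  calc ∑ i, |(t⁻¹ • h) i| ^ p = (t ^ p)⁻¹ * ∑ i, |h i| ^ p := by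
        rw [Finset.mul_sum]
        refine Finset.sum_congr rfl fun i _ => ?_
        rw [Pi.smul_apply, smul_eq_mul, abs_mul, abs_of_pos (inv_pos.2 ht),
          mul_rpow (by positivity) (abs_nonneg _), inv_rpow ht.le]
    _ ≤ 1 := by rwa [inv_mul_le_one₀ (by positivity)]

theorem continuous_lpNorm {p : ℝ} (hp : 0 < p) : Continuous (lpNorm p : (Fin n → ℝ) → ℝ) :=
  (continuous_finsetSum _ fun i _ =>
    (continuous_apply i).abs.rpow_const fun _ => .inr hp.le).rpow_const
      fun _ => .inr (by positivity)

theorem abs_apply_le_lpNorm {p : ℝ} (hp : 0 < p) (h : Fin n → ℝ) (i : Fin n) :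
    |h i| ≤ lpNorm p h := by
  rw [_root_.lpNorm, one_div, le_rpow_inv_iff_of_pos (abs_nonneg _)
    (Finset.sum_nonneg fun i _ => by positivity) hp]
  exact Finset.single_le_sum (f := fun i => |h i| ^ p) (fun j _ => by positivity)
    (Finset.mem_univ i)

theorem isCompact_lpBall {p : ℝ} (hp : 0 < p) (n : ℕ) : IsCompact (lpBall p n) :=
  (isCompact_Icc (a := (-1 : Fin n → ℝ)) (b := 1)).of_isClosed_subset
    (isClosed_le (continuous_lpNorm hp) continuous_const) fun h hh =>
      have habs i := abs_le.1 ((abs_apply_le_lpNorm hp h i).trans hh)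
      ⟨fun i => (habs i).1, fun i => (habs i).2⟩

/-- The enlargement `L (√r B_{ℓ^2} + r B_{ℓ^1}) + r^{1/α} B_{ℓ^α}` of the deviation inequality. -/
def mixedBall (α L r : ℝ) (n : ℕ) : Set (Fin n → ℝ) :=
  L • (√r • lpBall 2 n + r • lpBall 1 n) + r ^ (1 / α) • lpBall α n

theorem isCompact_mixedBall {α : ℝ} (hα : 0 < α) (L r : ℝ) (n : ℕ) :
    IsCompact (mixedBall α L r n) :=
  ((((isCompact_lpBall two_pos n).smul _).add ((isCompact_lpBall one_pos n).smul _)).smul L).add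
    ((isCompact_lpBall hα n).smul _)

theorem mem_mixedBall {α L r : ℝ} (hα : 0 < α) (hr : 0 < r) {h m : Fin n → ℝ}
    (hm : ∑ i, m i ≤ r)
    (hh : ∀ i, ∃ a b c, h i = L * (a + b) + c ∧ a ^ 2 ≤ m i ∧ |b| ≤ m i ∧ |c| ^ α ≤ m i) :
    h ∈ mixedBall α L r n := by
  choose a b c habc ha hb hc using hh
  have ha' : a ∈ √r • lpBall 2 n := mem_smul_lpBall two_pos (sqrt_pos.2 hr) <| by
    simp only [rpow_two, sq_abs, sq_sqrt hr.le]
    exact (Finset.sum_le_sum fun i _ => ha i).trans hm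
  have hb' : b ∈ r • lpBall 1 n := mem_smul_lpBall one_pos hr <| by
    simp only [rpow_one]
    exact (Finset.sum_le_sum fun i _ => hb i).trans hm
  have hc' : c ∈ r ^ (1 / α) • lpBall α n := mem_smul_lpBall hα (by positivity) <| by
    rw [← rpow_mul hr.le, one_div_mul_cancel hα.ne', rpow_one]
    exact (Finset.sum_le_sum fun i _ => hc i).trans hm
  exact ⟨L • (a + b), smul_mem_smul_set ⟨a, ha', b, hb', rfl⟩, c, hc',
    funext fun i => (habc i).symm⟩

end LpBall

section Splitting

variable {α K L M d x y : ℝ}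

theorem abs_sub_le_of_abs_sub_le_two_mul (hα0 : 0 ≤ α) (hα1 : α ≤ 1) (hK : 0 ≤ K) (hM : 1 ≤ M)
    (hx : |x| ≤ M) (hxy : |x - y| ≤ K * (1 + max |x| |y|) ^ (1 - α) * |d|)
    (hnear : |x - y| ≤ 2 * M) : |x - y| ≤ 4 * K * M ^ (1 - α) * |d| := by
  have hy : |y| ≤ 3 * M := by linarith [abs_sub_abs_le_abs_sub y x, abs_sub_comm x y]
  have hmax : 1 + max |x| |y| ≤ 4 * M := by linarith [max_le (by linarith : |x| ≤ 3 * M) hy]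
  have h4 : (4 : ℝ) ^ (1 - α) ≤ 4 := rpow_le_self_of_one_le (by norm_num) (by linarith)
  calc |x - y| ≤ K * (4 * M) ^ (1 - α) * |d| := hxy.trans (by gcongr)
    _ = 4 ^ (1 - α) * K * M ^ (1 - α) * |d| := by
        rw [mul_rpow (by norm_num) (by linarith)]
        ring
    _ ≤ 4 * K * M ^ (1 - α) * |d| := by gcongr

theorem abs_sub_rpow_le_of_two_mul_lt_abs_sub (hα0 : 0 ≤ α) (hα1 : α ≤ 1) (hK : 0 ≤ K) (hM : 1 ≤ M)
    (hx : |x| ≤ M) (hxy : |x - y| ≤ K * (1 + max |x| |y|) ^ (1 - α) * |d|)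
    (hfar : 2 * M < |x - y|) : |x - y| ^ α ≤ 2 * K * |d| := by
  have hpos : 0 < |x - y| := by linarith
  have hy : |y| ≤ |x - y| + M := by linarith [abs_sub_abs_le_abs_sub y x, abs_sub_comm x y]
  have hmax : 1 + max |x| |y| ≤ 2 * |x - y| := by
    linarith [max_le (by linarith : |x| ≤ |x - y| + M) hy]
  have h2 : (2 : ℝ) ^ (1 - α) ≤ 2 := rpow_le_self_of_one_le (by norm_num) (by linarith)
  refine le_of_mul_le_mul_right ?_ (rpow_pos_of_pos hpos (1 - α))
  calc |x - y| ^ α * |x - y| ^ (1 - α) = |x - y| := by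
        rw [← rpow_add hpos, add_sub_cancel, rpow_one]
    _ ≤ K * (2 * |x - y|) ^ (1 - α) * |d| := hxy.trans (by gcongr)
    _ = 2 ^ (1 - α) * K * |d| * |x - y| ^ (1 - α) := by
        rw [mul_rpow (by norm_num) hpos.le]
        ring
    _ ≤ 2 * K * |d| * |x - y| ^ (1 - α) := by gcongr

theorem exists_eq_mul_add_of_abs_le {h : ℝ} (hK : 1 ≤ K) (hL : 0 < L) (hh : |h| ≤ K * L * |d|) :
    ∃ a b, h = L * (a + b) ∧ a ^ 2 ≤ K ^ 2 * twoLevelCost d ∧ |b| ≤ K ^ 2 * twoLevelCost d := by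
  have hquot : |h / L| ≤ K * |d| := by
    rw [abs_div, abs_of_pos hL, div_le_iff₀ hL]
    linarith
  have hcost : 0 ≤ K ^ 2 * twoLevelCost d := by
    unfold twoLevelCost
    positivity
  rcases le_total |d| 1 with hd | hd
  · refine ⟨h / L, 0, by field_simp; ring, ?_, ?_⟩
    · rw [twoLevelCost, min_eq_left (by nlinarith [sq_abs d, abs_nonneg d]), ← mul_pow, ← sq_abs,
        ← sq_abs (K * d), abs_mul, abs_of_pos (one_pos.trans_le hK)]
      gcongr
    · rwa [abs_zero]
  · refine ⟨0, h / L, by field_simp; ring, ?_, ?_⟩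
    · rwa [zero_pow two_ne_zero]
    · rw [twoLevelCost, min_eq_right (by nlinarith [sq_abs d])]
      exact hquot.trans (by gcongr; nlinarith)

theorem mul_abs_le_sq_mul_twoLevelCost (hK : 1 ≤ K) (hd : 1 ≤ K * |d|) :
    K * |d| ≤ K ^ 2 * twoLevelCost d := by
  rw [twoLevelCost, mul_min_of_nonneg _ _ (by positivity)]
  exact le_min (by nlinarith [sq_abs d]) (by gcongr; nlinarith)

end Splitting

section Enlargement

variable {α K K' L M r : ℝ} {ψ : ℝ → ℝ}

theorem exists_neg_add_eq_mul_add_add {x y : ℝ} (hα0 : 0 < α) (hα1 : α ≤ 1) (hK : 0 ≤ K)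
    (hM : 1 ≤ M) (hL : 0 < L) (hK' : 1 ≤ K') (hKL : 4 * K * M ^ (1 - α) ≤ K' * L)
    (hKK' : 2 * K ≤ K')
    (hψ : ∀ x y, |x - y| ≤ K * (1 + max |x| |y|) ^ (1 - α) * |ψ x - ψ y|) (hx : |x| ≤ M) :
    ∃ a b c, -x + y = L * (a + b) + c ∧ a ^ 2 ≤ K' ^ 2 * twoLevelCost (ψ x - ψ y) ∧
      |b| ≤ K' ^ 2 * twoLevelCost (ψ x - ψ y) ∧ |c| ^ α ≤ K' ^ 2 * twoLevelCost (ψ x - ψ y) := by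
  have hcost : 0 ≤ K' ^ 2 * twoLevelCost (ψ x - ψ y) := by
    unfold twoLevelCost
    positivity
  have habs : |-x + y| = |x - y| := by rw [neg_add_eq_sub, abs_sub_comm]
  rcases le_or_gt |x - y| (2 * M) with hnear | hfar
  · have hsmall : |-x + y| ≤ K' * L * |ψ x - ψ y| :=
      calc |-x + y| ≤ 4 * K * M ^ (1 - α) * |ψ x - ψ y| := habs ▸
            abs_sub_le_of_abs_sub_le_two_mul hα0.le hα1 hK hM hx (hψ x y) hnear
        _ ≤ K' * L * |ψ x - ψ y| := by gcongr
    obtain ⟨a, b, hab, ha, hb⟩ := exists_eq_mul_add_of_abs_le hK' hL hsmall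
    exact ⟨a, b, 0, by rw [hab, add_zero], ha, hb, by rwa [abs_zero, zero_rpow hα0.ne']⟩
  · have hlarge : |x - y| ^ α ≤ K' * |ψ x - ψ y| :=
      (abs_sub_rpow_le_of_two_mul_lt_abs_sub hα0.le hα1 hK hM hx (hψ x y) hfar).trans (by gcongr)
    have hone : 1 ≤ K' * |ψ x - ψ y| := (one_le_rpow (by linarith) hα0.le).trans hlarge
    refine ⟨0, 0, -x + y, by ring, by rwa [zero_pow two_ne_zero], by rwa [abs_zero], ?_⟩
    rw [habs]
    exact hlarge.trans (mul_abs_le_sq_mul_twoLevelCost hK' hone)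

theorem exists_nuPi_real_mul_nuPi_real_compl_add_mixedBall_le (hα0 : 0 < α) (hα1 : α ≤ 1) (B : ℝ) :
    ∃ c > 0, ∀ n : ℕ, ∀ r > 0, ∀ L > 0, ∀ M ≥ 1, M ^ (1 - α) ≤ B * L →
      ∀ A ⊆ univ.pi fun _ : Fin n => {x : ℝ | |x| ≤ M}, MeasurableSet A →
        (nuPi α n).real A * (nuPi α n).real (A + mixedBall α L r n)ᶜ ≤ exp (-c * r) := by
  have := isProbabilityMeasure_nuAlpha hα0
  obtain ⟨K, hK, hψ⟩ := exists_abs_sub_le_mul_abs_logit_cdf_nuAlpha_sub hα0 hα1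
  obtain ⟨K', hK', hKB, hKK'⟩ : ∃ K' : ℝ, 1 ≤ K' ∧ 4 * K * B ≤ K' ∧ 2 * K ≤ K' :=
    ⟨_, le_max_left _ _, (le_max_left _ _).trans (le_max_right _ _),
      (le_max_right _ _).trans (le_max_right _ _)⟩
  refine ⟨1 / (32 * K' ^ 2), by positivity, fun n r hr L hL M hM hML A hAM hA => ?_⟩
  have hKL : 4 * K * M ^ (1 - α) ≤ K' * L :=
    calc 4 * K * M ^ (1 - α) ≤ 4 * K * (B * L) := by gcongr
      _ = 4 * K * B * L := by ring
      _ ≤ K' * L := by gcongr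
  rw [neg_mul, measureReal_def, measureReal_def, ← ENNReal.toReal_mul]
  refine ENNReal.toReal_le_of_le_ofReal (exp_pos _).le ?_
  refine (InfConvProperty.pi fun _ : Fin n =>
    infConvProperty_nuAlpha hα0).measure_mul_measure_compl_add_le hA (isCompact_mixedBall hα0 L r n)
      fun x hx y hxy => ?_
  contrapose! hxy
  refine mem_mixedBall hα0 hr ?_ fun i =>
    exists_neg_add_eq_mul_add_add hα0 hα1 hK.le hM hL hK' hKL hKK' hψ (hAM hx i trivial)
  rw [← Finset.mul_sum]
  rw [← Finset.sum_div, div_lt_iff₀ (by norm_num)] at hxy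
  refine (mul_le_mul_of_nonneg_left hxy.le (by positivity)).trans_eq ?_
  field_simp

end Enlargement

section Truncation

variable {α : ℝ}

theorem measureReal_pi_compl_univ_pi_le {ι : Type*} [Fintype ι] {X : ι → Type*}
    [∀ i, MeasurableSpace (X i)] (μ : ∀ i, Measure (X i)) [∀ i, IsProbabilityMeasure (μ i)]
    {s : ∀ i, Set (X i)} (hs : ∀ i, MeasurableSet (s i)) :
    (Measure.pi μ).real (univ.pi s)ᶜ ≤ ∑ i, (μ i).real (s i)ᶜ := by
  rw [univ_pi_eq_iInter, compl_iInter]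
  refine (measureReal_iUnion_fintype_le _).trans (Finset.sum_le_sum fun i _ => ?_)
  rw [← preimage_compl]
  exact ((measurePreserving_eval μ i).measureReal_preimage (hs i).compl.nullMeasurableSet).le

theorem log_mul_mul_le {K x C q : ℝ} (hK : 1 ≤ K) (hx : 2 ≤ x) (hC : 1 ≤ C) (hq : 0 < q) :
    log (K * x * C) ≤ (log K / log 2 + 1 + q / log 2) * (C ^ (1 / q) * log x) := by
  have hl2 : 0 < log 2 := log_pos one_lt_two
  have hlK : 0 ≤ log K := log_nonneg hK
  have hlx : log 2 ≤ log x := log_le_log two_pos hx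
  have hCq : 1 ≤ C ^ (1 / q) := one_le_rpow hC (by positivity)
  have hlogx : log x ≤ C ^ (1 / q) * log x := le_mul_of_one_le_left (hl2.le.trans hlx) hCq
  have hlogK : log K ≤ log K / log 2 * (C ^ (1 / q) * log x) := by
    rw [div_mul_eq_mul_div, le_div_iff₀ hl2]
    exact mul_le_mul_of_nonneg_left (hlx.trans hlogx) hlK
  have hlogC : log C ≤ q / log 2 * (C ^ (1 / q) * log x) :=
    calc log C ≤ C ^ (1 / q) / (1 / q) := log_le_rpow_div (by linarith) (by positivity)
      _ = q / log 2 * (C ^ (1 / q) * log 2) := by field_simp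
      _ ≤ q / log 2 * (C ^ (1 / q) * log x) := by gcongr
  rw [log_mul (by positivity) (by positivity), log_mul (by positivity) (by positivity)]
  linarith

theorem exists_rpow_log_le {K p : ℝ} (hK : 1 ≤ K) (hp : 0 ≤ p) :
    ∃ B, ∀ n : ℕ, 2 ≤ n → ∀ C ≥ (1 : ℝ), (2 * log (K * n * C)) ^ p ≤ B * (C * log n ^ p) := by
  obtain ⟨b, hb⟩ : ∃ b, b = log K / log 2 + 1 + (p + 1) / log 2 := ⟨_, rfl⟩
  have hb0 : 0 ≤ b := by
    have := log_nonneg hK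
    have := log_pos one_lt_two
    rw [hb]
    positivity
  refine ⟨(2 * b) ^ p, fun n hn C hC => ?_⟩
  have hn2 : (2 : ℝ) ≤ n := by exact_mod_cast hn
  have hlog : 0 ≤ log (K * n * C) :=
    log_nonneg (one_le_mul_of_one_le_of_one_le (by nlinarith) hC)
  have hCp : (C ^ (1 / (p + 1))) ^ p ≤ C := by
    rw [← rpow_mul (by linarith), one_div_mul_eq_div]
    exact rpow_le_self_of_one_le hC (div_le_one_of_le₀ (by linarith) (by linarith))
  calc (2 * log (K * n * C)) ^ p ≤ (2 * (b * (C ^ (1 / (p + 1)) * log n))) ^ p := by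
        gcongr
        exact hb ▸ log_mul_mul_le hK hn2 hC (by linarith)
    _ = (2 * b) ^ p * ((C ^ (1 / (p + 1))) ^ p * log n ^ p) := by
        rw [← mul_assoc, mul_rpow (by positivity) (by positivity),
          mul_rpow (by positivity) (log_natCast_nonneg n)]
    _ ≤ (2 * b) ^ p * (C * log n ^ p) := by gcongr

theorem exists_nuPi_real_compl_univ_pi_le (hα0 : 0 < α) (hα1 : α ≤ 1) :
    ∃ B, ∀ n : ℕ, 2 ≤ n → ∀ C ≥ (1 : ℝ), ∃ M ≥ 1,
      M ^ (1 - α) ≤ B * (C * log n ^ (1 / α - 1)) ∧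
        (nuPi α n).real (univ.pi fun _ => {x : ℝ | |x| ≤ M})ᶜ ≤ 1 / C := by
  have := isProbabilityMeasure_nuAlpha hα0
  obtain ⟨K, hK, htail⟩ := exists_nuAlpha_real_abs_gt_le hα0
  obtain ⟨B, hB⟩ := exists_rpow_log_le hK (sub_nonneg.2 ((one_le_div hα0).2 hα1))
  refine ⟨B, fun n hn C hC => ?_⟩
  obtain ⟨l, hl⟩ : ∃ l, l = 2 * log (K * n * C) := ⟨_, rfl⟩
  have hn2 : (2 : ℝ) ≤ n := by exact_mod_cast hn
  have hl1 : 1 ≤ l := by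
    have hKn : 2 ≤ K * n := by nlinarith
    have hlog : log 2 ≤ log (K * n * C) := log_le_log two_pos (by nlinarith)
    linarith [log_two_gt_d9]
  refine ⟨l ^ (1 / α), one_le_rpow hl1 (by positivity), ?_, ?_⟩
  · rw [← rpow_mul (by linarith), mul_sub, mul_one, one_div_mul_cancel hα0.ne', hl]
    exact hB n hn C hC
  · calc (nuPi α n).real (univ.pi fun _ => {x : ℝ | |x| ≤ l ^ (1 / α)})ᶜ
        ≤ ∑ _i : Fin n, (nuAlpha α).real {x | |x| ≤ l ^ (1 / α)}ᶜ :=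
          measureReal_pi_compl_univ_pi_le _ fun _ => measurableSet_le (by fun_prop) (by fun_prop)
      _ = n * (nuAlpha α).real {x | l ^ (1 / α) < |x|} := by
          simp only [Finset.sum_const, Finset.card_univ, Fintype.card_fin, nsmul_eq_mul,
            compl_ofPred, not_le]
      _ ≤ n * (K * exp (-(l ^ (1 / α)) ^ α / 2)) := by
          gcongr
          exact htail _ (by positivity)
      _ = 1 / C := by
          rw [← rpow_mul (by linarith), one_div_mul_cancel hα0.ne', rpow_one, hl, neg_div,
            mul_div_cancel_left₀ _ two_ne_zero, Real.exp_neg, Real.exp_log (by positivity)]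
          field_simp

end Truncation

theorem deviation_inequality_nuAlpha_general (α : ℝ) (hα0 : 0 < α) (hα1 : α ≤ 1) :
    ∃ c > (0 : ℝ), ∀ n : ℕ, 2 ≤ n → ∀ r > (0 : ℝ), ∀ A : Set (Fin n → ℝ),
      MeasurableSet A → ∀ C > (0 : ℝ), 1 / C < (nuPi α n A).toReal →
        (nuPi α n
          (A + (C * Real.log n ^ (1/α - 1)) •
              (Real.sqrt r • lpBall 2 n + r • lpBall 1 n) +
            r ^ (1/α) • lpBall α n)ᶜ).toReal ≤
          Real.exp (-c * r) / ((nuPi α n A).toReal - 1 / C) := by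
  obtain ⟨B, hB⟩ := exists_nuPi_real_compl_univ_pi_le hα0 hα1
  obtain ⟨c, hc, hdev⟩ := exists_nuPi_real_mul_nuPi_real_compl_add_mixedBall_le hα0 hα1 B
  refine ⟨c, hc, fun n hn r hr A hA C hC hCA => ?_⟩
  have := isProbabilityMeasure_nuPi hα0 n
  have hC1 : 1 ≤ C := ((div_lt_one hC).1 (hCA.trans_le measureReal_le_one)).le
  obtain ⟨M, hM, hML, hbox⟩ := hB n hn C hC1
  set box := univ.pi fun _ : Fin n => {x : ℝ | |x| ≤ M}
  have hboxm : MeasurableSet box :=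
    .univ_pi fun _ => measurableSet_le measurable_abs measurable_const
  set L := C * log n ^ (1 / α - 1)
  have hL : 0 < L := mul_pos hC (rpow_pos_of_pos (log_pos (by exact_mod_cast hn)) _)
  have hAbox : (nuPi α n).real A - 1 / C ≤ (nuPi α n).real (A ∩ box) := by
    have hsplit := measureReal_inter_add_sdiff (μ := nuPi α n) hboxm (s := A)
    have hdiff : (nuPi α n).real (A \ box) ≤ (nuPi α n).real boxᶜ :=
      measureReal_mono fun x hx => hx.2
    linarith
  have hmul := hdev n r hr L hL M hM hML _ inter_subset_right (hA.inter hboxm)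
  rw [add_assoc, le_div_iff₀ (sub_pos.2 hCA), mul_comm]
  refine (mul_le_mul hAbox (measureReal_mono ?_) measureReal_nonneg measureReal_nonneg).trans hmul
  exact compl_subset_compl.2 (add_subset_add_right inter_subset_left)

/-- Proposition (two-level deviation inequality for `ν_α^n`, `α ∈ (0,1)`). -/
theorem deviation_inequality_nuAlpha (α : ℝ) (hα0 : 0 < α) (hα1 : α < 1) :
    ∃ c > (0 : ℝ), ∀ n : ℕ, 2 ≤ n → ∀ r > (0 : ℝ), ∀ A : Set (Fin n → ℝ),
      MeasurableSet A → ∀ C > (0 : ℝ), 1 / C < (nuPi α n A).toReal →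
        (nuPi α n
          (A + (C * Real.log n ^ (1/α - 1)) •
              (Real.sqrt r • lpBall 2 n + r • lpBall 1 n) +
            r ^ (1/α) • lpBall α n)ᶜ).toReal ≤
          Real.exp (-c * r) / ((nuPi α n A).toReal - 1 / C) :=
  deviation_inequality_nuAlpha_general α hα0 hα1.le

end
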